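/- arXiv:1607.05008 — 2 statements merged into one kernel-verified Lean document; each statement's English description precedes it below -/
import Mathlib

section
/- Let P : ℕ → ℝ be a sequence of expected partitioning costs with P(0) = P(1) = 0, and suppose there exist constants A > 0 and d ∈ ℕ with |P(n)| ≤ A·(n+1)^d for all n. Let C be the dual-pivot quickselect cost array defined from P by the standard recurrence, and for k ≥ 1 let C_k(z) = ∑_{n≥0} C(n,k)·z^n for real z with |z| < 1. Then for every fixed j ≥ 1: all these series converge absolutely on (−1,1), C_j is twice differentiable on (−1,1) with C_j(0) = 0 and C_j'(0) = 0, and for every z ∈ (−1,1) one has C_j''(z) − (2/(1−z)²)·C_j(z) = ∑_{n ≥ max(j,2)} n(n−1)·P(n)·z^{n−2} + (2/(1−z))·∑_{k=1}^{j−1} C_k(z)·z^{j−k−1} + 2·∑_{k=1}^{j−2} (j−k−1)·C_k(z)·z^{j−k−2}. -/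
open Finset

/-- Harmonic numbers `H_n = ∑_{k=1}^n 1/k`. -/
noncomputable def H (n : ℕ) : ℝ := ∑ k ∈ Finset.Icc 1 n, (1 : ℝ) / k

/-- Alternating harmonic numbers `H^alt_n = ∑_{k=1}^n (-1)^k/k`. -/
noncomputable def Halt (n : ℕ) : ℝ := ∑ k ∈ Finset.Icc 1 n, (-1 : ℝ) ^ k / k

/-- The dual-pivot quickselect cost array defined from expected partitioning
costs `P` by the standard recurrence:  `C(n,j) = 0` whenever `n ≤ 1` or `j < 1`
or `j > n`; and for `n ≥ 2` and `1 ≤ j ≤ n`,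
`C(n,j) = P(n) + (2/(n(n−1)))·( ∑_{s=j}^{n−2} (n−1−s)·C(s,j)
  + ∑_{m=1}^{n−2} ∑_{s=max(0,j−m−1)}^{min(j−2, n−m−2)} C(m, j−s−1)
  + ∑_{ℓ=n−j+1}^{n−2} (n−1−ℓ)·C(ℓ, n−j+1) )`.
(The `attach` is only needed for the termination proof.) -/
noncomputable def qsCost (P : ℕ → ℝ) : ℕ → ℤ → ℝ
  | n, j =>
    if n ≤ 1 ∨ j < 1 ∨ (n : ℤ) < j then 0
    else
      P n + 2 / ((n : ℝ) * ((n : ℝ) - 1)) *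
        ((∑ s ∈ (Finset.Icc j.toNat (n - 2)).attach,
            ((n : ℝ) - 1 - (s : ℕ)) * qsCost P (s : ℕ) j) +
         (∑ m ∈ (Finset.Icc 1 (n - 2)).attach,
            ∑ s ∈ Finset.Icc (max 0 (j - ((m : ℕ) : ℤ) - 1))
                (min (j - 2) ((n : ℤ) - ((m : ℕ) : ℤ) - 2)),
              qsCost P (m : ℕ) (j - s - 1)) +
         (∑ l ∈ (Finset.Icc ((n : ℤ) - j + 1).toNat (n - 2)).attach,
            ((n : ℝ) - 1 - (l : ℕ)) * qsCost P (l : ℕ) ((n : ℤ) - j + 1)))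
  termination_by n j => n
  decreasing_by
    · have hs := s.2; simp only [Finset.mem_Icc] at hs; omega
    · have hm := m.2; simp only [Finset.mem_Icc] at hm; omega
    · have hl := l.2; simp only [Finset.mem_Icc] at hl; omega

/-- `C_k(z) = ∑_{n≥0} C(n,k)·z^n`, the generating function of the costs of
selecting the `k`-th smallest element. -/
noncomputable def rankGF (P : ℕ → ℝ) (k : ℕ) (z : ℝ) : ℝ :=
  ∑' n : ℕ, qsCost P n (k : ℤ) * z ^ n

lemma qs_zero (P : ℕ → ℝ) (n : ℕ) (j : ℤ) (h : n ≤ 1 ∨ j < 1 ∨ (n : ℤ) < j) :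
    qsCost P n j = 0 := by
  rw [qsCost, if_pos h]

lemma qs_rec0 (P : ℕ → ℝ) (n : ℕ) (j : ℤ) (h : ¬ (n ≤ 1 ∨ j < 1 ∨ (n : ℤ) < j)) :
    qsCost P n j = P n + 2 / ((n : ℝ) * ((n : ℝ) - 1)) *
        ((∑ s ∈ Finset.Icc j.toNat (n - 2), ((n : ℝ) - 1 - (s : ℝ)) * qsCost P s j) +
         (∑ m ∈ Finset.Icc 1 (n - 2),
            ∑ s ∈ Finset.Icc (max 0 (j - (m : ℤ) - 1)) (min (j - 2) ((n : ℤ) - (m : ℤ) - 2)),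
              qsCost P m (j - s - 1)) +
         (∑ l ∈ Finset.Icc ((n : ℤ) - j + 1).toNat (n - 2),
            ((n : ℝ) - 1 - (l : ℝ)) * qsCost P l ((n : ℤ) - j + 1))) := by
  rw [qsCost, if_neg h]
  rw [Finset.sum_attach (Finset.Icc j.toNat (n - 2))
      (fun s => ((n : ℝ) - 1 - (s : ℝ)) * qsCost P s j),
    Finset.sum_attach (Finset.Icc 1 (n - 2)) (fun m =>
            ∑ s ∈ Finset.Icc (max 0 (j - (m : ℤ) - 1)) (min (j - 2) ((n : ℤ) - (m : ℤ) - 2)),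
              qsCost P m (j - s - 1)),
    Finset.sum_attach (Finset.Icc ((n : ℤ) - j + 1).toNat (n - 2))
      (fun l => ((n : ℝ) - 1 - (l : ℝ)) * qsCost P l ((n : ℤ) - j + 1))]

lemma qs_rec (P : ℕ → ℝ) (n : ℕ) (j : ℤ) (h1 : 1 ≤ j) (h2 : j ≤ (n : ℤ) + 2) :
    qsCost P (n + 2) j = P (n + 2) + 2 / (((n : ℝ) + 2) * ((n : ℝ) + 1)) *
        ((∑ s ∈ Finset.Icc j.toNat n, ((n : ℝ) + 1 - (s : ℝ)) * qsCost P s j) +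
         (∑ m ∈ Finset.Icc 1 n,
            ∑ s ∈ Finset.Icc (max 0 (j - (m : ℤ) - 1)) (min (j - 2) ((n : ℤ) - (m : ℤ))),
              qsCost P m (j - s - 1)) +
         (∑ l ∈ Finset.Icc ((n : ℤ) + 2 - j + 1).toNat n,
            ((n : ℝ) + 1 - (l : ℝ)) * qsCost P l ((n : ℤ) + 2 - j + 1))) := by
  rw [qs_rec0 P (n + 2) j (by omega)]
  have e1 : ((n + 2 : ℕ) : ℝ) - 1 = (n : ℝ) + 1 := by push_cast; ring
  have e2 : ((n + 2 : ℕ) : ℝ) = (n : ℝ) + 2 := by push_cast; ring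
  have e3 : ((n + 2 : ℕ) : ℤ) = (n : ℤ) + 2 := by push_cast; ring
  have e4 : ∀ m : ℤ, (n : ℤ) + 2 - m - 2 = n - m := by intro m; ring
  rw [e1, e2, e3]
  simp only [e4, Nat.add_sub_cancel]

lemma qs_symm (P : ℕ → ℝ) (n : ℕ) : ∀ j : ℤ, qsCost P n j = qsCost P n (n + 1 - j) := by
  induction n using Nat.strong_induction_on with
  | _ n ih =>
  intro j
  by_cases h : n ≤ 1 ∨ j < 1 ∨ (n : ℤ) < j
  · rw [qs_zero P n j h, qs_zero P n _ (by omega)]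
  · push Not at h
    obtain ⟨h0, h1, h2⟩ := h
    obtain ⟨n, rfl⟩ : ∃ m, n = m + 2 := ⟨n - 2, by omega⟩
    push_cast at h2 ⊢
    rw [qs_rec P n j h1 h2, qs_rec P n ((n : ℤ) + 2 + 1 - j) (by omega) (by omega)]
    have e1 : (n : ℤ) + 2 - ((n : ℤ) + 2 + 1 - j) + 1 = j := by ring
    have e2 : (n : ℤ) + 2 + 1 - j = (n : ℤ) + 2 - j + 1 := by ring
    rw [e1, e2]
    have hm : (∑ m ∈ Finset.Icc 1 n,
            ∑ s ∈ Finset.Icc (max 0 (j - (m : ℤ) - 1)) (min (j - 2) ((n : ℤ) - (m : ℤ))),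
              qsCost P m (j - s - 1)) = ∑ m ∈ Finset.Icc 1 n,
            ∑ s ∈ Finset.Icc (max 0 (((n : ℤ) + 2 - j + 1) - (m : ℤ) - 1))
              (min (((n : ℤ) + 2 - j + 1) - 2) ((n : ℤ) - (m : ℤ))),
              qsCost P m (((n : ℤ) + 2 - j + 1) - s - 1) := by
      refine Finset.sum_congr rfl fun m hm => ?_
      rw [Finset.mem_Icc] at hm
      refine Finset.sum_nbij' (fun s => (n : ℤ) - m - s) (fun s => (n : ℤ) - m - s) ?_ ?_ ?_ ?_ ?_
      · intro s hs; rw [Finset.mem_Icc] at hs ⊢; omega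
      · intro s hs; rw [Finset.mem_Icc] at hs ⊢; omega
      · intro s hs; ring
      · intro s hs; ring
      · intro s hs
        rw [ih m (by omega)]
        congr 1; ring
    rw [hm]; ring

/-- the recurrence in convolution form -/
lemma qs_conv (P : ℕ → ℝ) (j : ℕ) (hj : 1 ≤ j) (n : ℕ) :
    ((n : ℝ) + 2) * ((n : ℝ) + 1) * qsCost P (n + 2) j =
      (if j ≤ n + 2 then ((n : ℝ) + 2) * ((n : ℝ) + 1) * P (n + 2) else 0)
      + 2 * ∑ s ∈ Finset.range (n + 1), ((n : ℝ) + 1 - (s : ℝ)) * qsCost P s j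
      + 2 * ∑ k ∈ Finset.Icc 1 (j - 1), (if j - k - 1 ≤ n then
          ∑ m ∈ Finset.range (n - (j - k - 1) + 1), qsCost P m k else 0)
      + 2 * ∑ k ∈ Finset.Icc 1 (j - 2), ((j : ℝ) - (k : ℝ) - 1) * (if j - k - 2 ≤ n then
          qsCost P (n - (j - k - 2)) k else 0) := by
  by_cases h : j ≤ n + 2
  · rw [if_pos h, qs_rec P n j (by omega) (by omega)]
    have s1 : (∑ s ∈ Finset.Icc (j : ℤ).toNat n, ((n : ℝ) + 1 - (s : ℝ)) * qsCost P s j)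
        = ∑ s ∈ Finset.range (n + 1), ((n : ℝ) + 1 - (s : ℝ)) * qsCost P s j := by
      refine Finset.sum_subset ?_ ?_
      · intro s hs; rw [Finset.mem_Icc] at hs; rw [Finset.mem_range]; omega
      · intro s hs hs'
        rw [Finset.mem_Icc] at hs'; rw [Finset.mem_range] at hs
        rw [qs_zero P s j (by omega), mul_zero]
    have s3 : (∑ l ∈ Finset.Icc ((n : ℤ) + 2 - j + 1).toNat n,
            ((n : ℝ) + 1 - (l : ℝ)) * qsCost P l ((n : ℤ) + 2 - j + 1))
        = ∑ k ∈ Finset.Icc 1 (j - 2), ((j : ℝ) - (k : ℝ) - 1) * (if j - k - 2 ≤ n then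
          qsCost P (n - (j - k - 2)) k else 0) := by
      refine Finset.sum_nbij' (fun l => l + j - n - 2) (fun k => n + 2 + k - j) ?_ ?_ ?_ ?_ ?_
      · intro s hs; rw [Finset.mem_Icc] at hs ⊢; omega
      · intro s hs; rw [Finset.mem_Icc] at hs ⊢; omega
      · intro s hs; rw [Finset.mem_Icc] at hs; omega
      · intro s hs; rw [Finset.mem_Icc] at hs; omega
      · intro l hl
        rw [Finset.mem_Icc] at hl
        obtain ⟨k, hk⟩ : ∃ k, l + j = n + 2 + k := ⟨l + j - n - 2, by omega⟩
        have ek : l + j - n - 2 = k := by omega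
        simp only [ek]
        rw [if_pos (by omega), qs_symm P l]
        have el : n - (j - k - 2) = l := by omega
        rw [el]
        have hk' : (l : ℝ) + j = n + 2 + k := by exact_mod_cast hk
        have hk2 : (l : ℤ) + 1 - ((n : ℤ) + 2 - j + 1) = k := by omega
        rw [hk2]
        congr 1; linarith
    have s2 : (∑ m ∈ Finset.Icc 1 n,
            ∑ s ∈ Finset.Icc (max 0 ((j : ℤ) - (m : ℤ) - 1)) (min ((j : ℤ) - 2) ((n : ℤ) - (m : ℤ))),
              qsCost P m (j - s - 1))
        = ∑ k ∈ Finset.Icc 1 (j - 1), (if j - k - 1 ≤ n then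
          ∑ m ∈ Finset.range (n - (j - k - 1) + 1), qsCost P m k else 0) := by
      have inner : ∀ m ∈ Finset.Icc 1 n,
          (∑ s ∈ Finset.Icc (max 0 ((j : ℤ) - (m : ℤ) - 1))
            (min ((j : ℤ) - 2) ((n : ℤ) - (m : ℤ))), qsCost P m (j - s - 1))
          = ∑ k ∈ Finset.Icc 1 (j - 1), if m + (j - k - 1) ≤ n then qsCost P m k else 0 := by
        intro m hm
        rw [Finset.mem_Icc] at hm
        rw [← Finset.sum_filter]
        have : ∑ k ∈ Finset.Icc 1 (j - 1) with m + (j - k - 1) ≤ n, qsCost P m k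
            = ∑ k ∈ Finset.Icc 1 (j - 1) with m + (j - k - 1) ≤ n ∧ k ≤ m, qsCost P m k := by
          symm
          refine Finset.sum_subset ?_ ?_
          · intro k hk; simp only [Finset.mem_filter] at hk ⊢; tauto
          · intro k hk hk'
            simp only [Finset.mem_filter] at hk hk'
            exact qs_zero P m k (by right; right; by_contra hc; exact hk' ⟨hk.1, hk.2, by omega⟩)
        rw [this]
        refine Finset.sum_nbij' (fun s => ((j : ℤ) - s - 1).toNat) (fun k => (j : ℤ) - k - 1)
          ?_ ?_ ?_ ?_ ?_
        · intro s hs; rw [Finset.mem_Icc] at hs; rw [Finset.mem_filter, Finset.mem_Icc]; omega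
        · intro s hs; rw [Finset.mem_filter, Finset.mem_Icc] at hs; rw [Finset.mem_Icc]; omega
        · intro s hs; rw [Finset.mem_Icc] at hs; omega
        · intro s hs; rw [Finset.mem_filter, Finset.mem_Icc] at hs; omega
        · intro s hs; rw [Finset.mem_Icc] at hs
          congr 1; omega
      rw [Finset.sum_congr rfl inner, Finset.sum_comm]
      refine Finset.sum_congr rfl fun k hk => ?_
      rw [Finset.mem_Icc] at hk
      rw [← Finset.sum_filter]
      split_ifs with hp
      · refine Finset.sum_subset ?_ ?_
        · intro m hm
          rw [Finset.mem_filter, Finset.mem_Icc] at hm; rw [Finset.mem_range]; omega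
        · intro m hm hm'
          rw [Finset.mem_filter, Finset.mem_Icc] at hm'; rw [Finset.mem_range] at hm
          exact qs_zero P m k (by omega)
      · refine Finset.sum_eq_zero fun m hm => ?_
        rw [Finset.mem_filter, Finset.mem_Icc] at hm; omega
    rw [s1, s2, s3]
    have : ((n : ℝ) + 2) * ((n : ℝ) + 1) ≠ 0 := by positivity
    field_simp
    ring
  · rw [if_neg h, qs_zero P (n + 2) j (by omega)]
    rw [Finset.sum_eq_zero, Finset.sum_eq_zero, Finset.sum_eq_zero]
    · simp
    · intro k hk
      rw [Finset.mem_Icc] at hk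
      split_ifs
      · rw [qs_zero P _ _ (by omega), mul_zero]
      · simp
    · intro k hk
      rw [Finset.mem_Icc] at hk
      split_ifs
      · refine Finset.sum_eq_zero fun m hm => ?_
        rw [Finset.mem_range] at hm
        exact qs_zero P _ _ (by omega)
      · rfl
    · intro s hs
      rw [Finset.mem_range] at hs
      rw [qs_zero P _ _ (by omega), mul_zero]

/-- polynomially bounded sequences -/
def PolyB (a : ℕ → ℝ) : Prop :=
  ∃ (K : ℝ) (e : ℕ), 0 ≤ K ∧ ∀ n, |a n| ≤ K * ((n : ℝ) + 1) ^ e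

lemma PolyB.zero : PolyB (fun _ => 0) := ⟨0, 0, le_rfl, by simp⟩

lemma PolyB.of_le {a b : ℕ → ℝ} (hb : PolyB b) (h : ∀ n, |a n| ≤ |b n|) : PolyB a := by
  obtain ⟨K, e, hK, hb⟩ := hb
  exact ⟨K, e, hK, fun n => (h n).trans (hb n)⟩

lemma PolyB.add {a b : ℕ → ℝ} (ha : PolyB a) (hb : PolyB b) : PolyB (fun n => a n + b n) := by
  obtain ⟨K, e, hK, ha⟩ := ha
  obtain ⟨L, f, hL, hb⟩ := hb
  refine ⟨K + L, e + f, by positivity, fun n => (abs_add_le _ _).trans ?_⟩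
  rw [add_mul]
  have h1 : (1 : ℝ) ≤ (n : ℝ) + 1 := by linarith [(Nat.cast_nonneg n : (0 : ℝ) ≤ n)]
  refine add_le_add ((ha n).trans ?_) ((hb n).trans ?_)
  · gcongr
    omega
  · gcongr
    omega

lemma PolyB.mul {a b : ℕ → ℝ} (ha : PolyB a) (hb : PolyB b) : PolyB (fun n => a n * b n) := by
  obtain ⟨K, e, hK, ha⟩ := ha
  obtain ⟨L, f, hL, hb⟩ := hb
  refine ⟨K * L, e + f, by positivity, fun n => ?_⟩
  rw [abs_mul]
  calc |a n| * |b n| ≤ (K * ((n : ℝ) + 1) ^ e) * (L * ((n : ℝ) + 1) ^ f) :=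
        mul_le_mul (ha n) (hb n) (abs_nonneg _) (by positivity)
    _ = _ := by rw [pow_add]; ring

lemma PolyB.const (c : ℝ) : PolyB (fun _ => c) := ⟨|c|, 0, abs_nonneg _, by simp⟩

lemma PolyB.cast : PolyB (fun n => (n : ℝ)) :=
  ⟨1, 1, zero_le_one, fun n => by rw [abs_of_nonneg (by positivity)]; linarith⟩

lemma PolyB.succ {a : ℕ → ℝ} (ha : PolyB a) : PolyB (fun n => a (n + 1)) := by
  obtain ⟨K, e, hK, ha⟩ := ha
  refine ⟨K * 2 ^ e, e, by positivity, fun n => (ha _).trans ?_⟩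
  rw [mul_assoc, ← mul_pow]
  push_cast
  gcongr
  linarith [(Nat.cast_nonneg n : (0 : ℝ) ≤ n)]

lemma PolyB.shift {a : ℕ → ℝ} (ha : PolyB a) (p : ℕ) :
    PolyB (fun n => if p ≤ n then a (n - p) else 0) := by
  obtain ⟨K, e, hK, ha⟩ := ha
  refine ⟨K, e, hK, fun n => ?_⟩
  dsimp only
  split_ifs
  · refine (ha _).trans ?_
    gcongr
    omega
  · simp; positivity

lemma PolyB.psum {a : ℕ → ℝ} (ha : PolyB a) :
    PolyB (fun n => ∑ m ∈ Finset.range (n + 1), a m) := by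
  obtain ⟨K, e, hK, ha⟩ := ha
  refine ⟨K, e + 1, hK, fun n => (Finset.abs_sum_le_sum_abs _ _).trans ?_⟩
  calc ∑ m ∈ Finset.range (n + 1), |a m|
      ≤ ∑ m ∈ Finset.range (n + 1), K * ((n : ℝ) + 1) ^ e := by
        refine Finset.sum_le_sum fun m hm => (ha m).trans ?_
        rw [Finset.mem_range] at hm
        gcongr
        omega
    _ = _ := by simp; ring

lemma PolyB.sum {ι : Type*} (s : Finset ι) (a : ι → ℕ → ℝ) (h : ∀ i ∈ s, PolyB (a i)) :
    PolyB (fun n => ∑ i ∈ s, a i n) := by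
  classical
  induction s using Finset.induction_on with
  | empty => simpa using PolyB.zero
  | insert i s hi ih =>
    simp only [Finset.sum_insert hi]
    exact (h i (Finset.mem_insert_self i s)).add
      (ih fun k hk => h k (Finset.mem_insert_of_mem hk))

lemma PolyB.summable {a : ℕ → ℝ} (ha : PolyB a) {z : ℝ} (hz : |z| < 1) :
    Summable (fun n => |a n * z ^ n|) := by
  obtain ⟨K, e, hK, ha⟩ := ha
  obtain ⟨r, hr1, hr2⟩ := exists_between hz
  have hr0 : 0 < r := (abs_nonneg z).trans_lt hr1
  have h := summable_pow_mul_geometric_of_norm_lt_one (R := ℝ) e (r := r)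
    (by rw [Real.norm_eq_abs, abs_of_pos hr0]; exact hr2)
  have h2 := ((summable_nat_add_iff 1).2 h).mul_left (K * r⁻¹)
  refine Summable.of_nonneg_of_le (fun n => abs_nonneg _) (fun n => ?_) h2
  rw [abs_mul, abs_pow]
  calc |a n| * |z| ^ n ≤ (K * ((n : ℝ) + 1) ^ e) * r ^ n := by
        gcongr
        exact ha n
    _ = _ := by push_cast; rw [pow_succ r n]; field_simp

lemma PolyB.hasSum {a : ℕ → ℝ} (ha : PolyB a) {z : ℝ} (hz : |z| < 1) :
    HasSum (fun n => a n * z ^ n) (∑' n, a n * z ^ n) :=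
  (ha.summable hz).of_abs.hasSum

lemma PolyB.hasDerivAt {a : ℕ → ℝ} (ha : PolyB a) {z : ℝ} (hz : |z| < 1) :
    HasDerivAt (fun z => ∑' n, a n * z ^ n) (∑' n : ℕ, (((n : ℝ) + 1) * a (n + 1)) * z ^ n) z := by
  obtain ⟨r, hr1, hr2⟩ := exists_between hz
  have hr0 : 0 < r := (abs_nonneg z).trans_lt hr1
  have hb : PolyB (fun n => ((n : ℝ) + 1) * a (n + 1)) :=
    (PolyB.cast.add (PolyB.const 1)).mul ha.succ
  have hu : Summable (fun n : ℕ => |a n * (n * r ^ (n - 1))|) := by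
    refine (summable_nat_add_iff 1).1 ?_
    refine (hb.summable (z := r) (by rwa [abs_of_pos hr0])).congr fun n => ?_
    push_cast
    congr 1
    ring
  have key := hasDerivAt_tsum_of_isPreconnected (𝕜 := ℝ) (F := ℝ)
    (g := fun n z => a n * z ^ n) (g' := fun n z => a n * (n * z ^ (n - 1)))
    (t := Metric.ball 0 r) (y₀ := 0) (y := z) hu Metric.isOpen_ball
    (convex_ball (0 : ℝ) r).isPreconnected
    (fun n y _ => (hasDerivAt_pow n y).const_mul (a n))
    (fun n y hy => by
      rw [mem_ball_zero_iff, Real.norm_eq_abs] at hy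
      rw [Real.norm_eq_abs, abs_mul, abs_mul, abs_mul, abs_mul, abs_pow, abs_pow, abs_of_pos hr0]
      gcongr)
    (by simpa using hr0) (ha.summable (by simp)).of_abs
    (by simpa using hr1)
  have hs : Summable (fun n : ℕ => a n * (n * z ^ (n - 1))) := by
    refine (summable_nat_add_iff 1).1 ?_
    refine (hb.summable hz).of_abs.congr fun n => ?_
    push_cast
    ring
  rw [hs.tsum_eq_zero_add] at key
  simp only [Nat.cast_zero, zero_mul, mul_zero, zero_add, Nat.add_sub_cancel] at key
  have he : (∑' n : ℕ, (((n : ℝ) + 1) * a (n + 1)) * z ^ n)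
      = ∑' n : ℕ, a (n + 1) * (((n + 1 : ℕ) : ℝ) * z ^ n) := by
    refine tsum_congr fun n => ?_
    push_cast
    ring
  rw [he]
  exact key

lemma PolyB.hasSum_psum {a : ℕ → ℝ} (ha : PolyB a) {z f : ℝ} (hz : |z| < 1)
    (hf : HasSum (fun n => a n * z ^ n) f) :
    HasSum (fun n => (∑ m ∈ Finset.range (n + 1), a m) * z ^ n) (f * (1 - z)⁻¹) := by
  have hg : Summable (fun n => ‖z ^ n‖) := summable_norm_geometric_of_norm_lt_one hz
  have h := hasSum_sum_range_mul_of_summable_norm (f := fun n => a n * z ^ n)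
    (g := fun n => z ^ n) (ha.summable hz) hg
  rw [hf.tsum_eq, tsum_geometric_of_norm_lt_one hz] at h
  have he : (fun n => (∑ m ∈ Finset.range (n + 1), a m) * z ^ n)
      = fun n => ∑ k ∈ Finset.range (n + 1), a k * z ^ k * z ^ (n - k) := by
    funext n
    rw [Finset.sum_mul]
    refine Finset.sum_congr rfl fun k hk => ?_
    rw [Finset.mem_range] at hk
    rw [mul_assoc, ← pow_add]
    congr 2
    omega
  rw [he]
  exact h

lemma hasSum_shift {a : ℕ → ℝ} {z f : ℝ} (p : ℕ)
    (hf : HasSum (fun n => a n * z ^ n) f) :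
    HasSum (fun n => (if p ≤ n then a (n - p) else 0) * z ^ n) (f * z ^ p) := by
  rw [← (add_left_injective p).hasSum_iff]
  · have he : ((fun n => (if p ≤ n then a (n - p) else 0) * z ^ n) ∘ fun x => x + p)
        = fun n => a n * z ^ n * z ^ p := by
      funext n
      simp [pow_add, mul_assoc]
    rw [he]
    exact hf.mul_right (z ^ p)
  · intro n hn
    rw [if_neg, zero_mul]
    intro hp
    exact hn ⟨n - p, by simp; omega⟩

lemma qs_polyB (P : ℕ → ℝ) (hP : PolyB P) (j : ℕ) : 1 ≤ j → PolyB (fun n => qsCost P n j) := by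
  induction j using Nat.strong_induction_on with
  | _ j ih =>
  intro hj
  have hR : PolyB (fun n =>
      (if j ≤ n + 2 then ((n : ℝ) + 2) * ((n : ℝ) + 1) * P (n + 2) else 0)
      + 2 * ∑ k ∈ Finset.Icc 1 (j - 1), (if j - k - 1 ≤ n then
          ∑ m ∈ Finset.range (n - (j - k - 1) + 1), qsCost P m k else 0)
      + 2 * ∑ k ∈ Finset.Icc 1 (j - 2), ((j : ℝ) - (k : ℝ) - 1) * (if j - k - 2 ≤ n then
          qsCost P (n - (j - k - 2)) k else 0)) := by
    refine PolyB.add (PolyB.add ?_ ?_) ?_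
    · refine PolyB.of_le (b := fun n => ((n : ℝ) + 2) * ((n : ℝ) + 1) * P (n + 2))
        (((PolyB.cast.add (PolyB.const 2)).mul (PolyB.cast.add (PolyB.const 1))).mul
          hP.succ.succ) fun n => ?_
      split_ifs
      · exact le_rfl
      · simp; positivity
    · refine (PolyB.const 2).mul (PolyB.sum _ (fun (k n : ℕ) => if j - k - 1 ≤ n then
          ∑ m ∈ Finset.range (n - (j - k - 1) + 1), qsCost P m k else 0) fun k hk => ?_)
      rw [Finset.mem_Icc] at hk
      exact (ih k (by omega) hk.1).psum.shift (j - k - 1)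
    · refine (PolyB.const 2).mul (PolyB.sum _ (fun (k n : ℕ) => ((j : ℝ) - (k : ℝ) - 1) *
          (if j - k - 2 ≤ n then qsCost P (n - (j - k - 2)) k else 0)) fun k hk => ?_)
      rw [Finset.mem_Icc] at hk
      exact (PolyB.const _).mul ((ih k (by omega) hk.1).shift (j - k - 2))
  obtain ⟨K, e, hK, hR⟩ := hR
  refine ⟨K, e + 1, hK, fun n => ?_⟩
  dsimp only at hR ⊢
  induction n using Nat.strong_induction_on with
  | _ n ihn =>
  by_cases h : n ≤ 1
  · rw [qs_zero P n j (Or.inl h), abs_zero]; positivity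
  obtain ⟨n, rfl⟩ : ∃ m, n = m + 2 := ⟨n - 2, by omega⟩
  have hc := qs_conv P j hj n
  have hr := hR n
  have hS : |∑ s ∈ Finset.range (n + 1), ((n : ℝ) + 1 - (s : ℝ)) * qsCost P s j|
      ≤ ((n : ℝ) + 1) * ((n : ℝ) + 2) / 2 * (K * ((n : ℝ) + 1) ^ (e + 1)) := by
    refine (Finset.abs_sum_le_sum_abs _ _).trans ?_
    have hg : ∀ N : ℕ, ∑ s ∈ Finset.range N, ((N : ℝ) - s) = (N : ℝ) * (N + 1) / 2 := by
      intro N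
      induction N with
      | zero => simp
      | succ N ihN =>
        rw [Finset.sum_range_succ]
        have : ∑ s ∈ Finset.range N, (((N + 1 : ℕ) : ℝ) - s)
            = ∑ s ∈ Finset.range N, (((N : ℝ) - s) + 1) :=
          Finset.sum_congr rfl fun s _ => by push_cast; ring
        rw [this, Finset.sum_add_distrib, ihN]
        simp
        ring
    have hg' := hg (n + 1)
    push_cast at hg'
    have e2 : ((n : ℝ) + 1) * ((n : ℝ) + 2) / 2 = ((n : ℝ) + 1) * ((n : ℝ) + 1 + 1) / 2 := by ring
    rw [e2, ← hg', Finset.sum_mul]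
    refine Finset.sum_le_sum fun s hs => ?_
    rw [Finset.mem_range] at hs
    have hs' : (s : ℝ) ≤ n := by exact_mod_cast (by omega : s ≤ n)
    rw [abs_mul, abs_of_nonneg (by linarith : (0 : ℝ) ≤ (n : ℝ) + 1 - s)]
    refine mul_le_mul_of_nonneg_left ((ihn s (by omega)).trans ?_) (by linarith)
    gcongr
  set S := ∑ s ∈ Finset.range (n + 1), ((n : ℝ) + 1 - (s : ℝ)) * qsCost P s j
  have hc' : ((n : ℝ) + 2) * ((n : ℝ) + 1) * qsCost P (n + 2) j = 2 * S + (
      (if j ≤ n + 2 then ((n : ℝ) + 2) * ((n : ℝ) + 1) * P (n + 2) else 0)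
      + 2 * ∑ k ∈ Finset.Icc 1 (j - 1), (if j - k - 1 ≤ n then
          ∑ m ∈ Finset.range (n - (j - k - 1) + 1), qsCost P m k else 0)
      + 2 * ∑ k ∈ Finset.Icc 1 (j - 2), ((j : ℝ) - (k : ℝ) - 1) * (if j - k - 2 ≤ n then
          qsCost P (n - (j - k - 2)) k else 0)) := by
    rw [hc]; ring
  have h0 : (0 : ℝ) ≤ n := Nat.cast_nonneg n
  set Q : ℝ := ((n : ℝ) + 2) * ((n : ℝ) + 1) with hQ
  have hQ1 : 1 ≤ Q := by rw [hQ]; nlinarith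
  have habs : Q * |qsCost P (n + 2) j| ≤ Q * (K * ((n : ℝ) + 1) ^ (e + 1))
      + K * ((n : ℝ) + 1) ^ e := by
    have : Q * |qsCost P (n + 2) j| = |Q * qsCost P (n + 2) j| := by
      rw [abs_mul, abs_of_nonneg (by linarith : 0 ≤ Q)]
    rw [this, hc']
    refine (abs_add_le _ _).trans (add_le_add ?_ hr)
    rw [abs_mul, abs_two]
    calc 2 * |S| ≤ 2 * (((n : ℝ) + 1) * ((n : ℝ) + 2) / 2 * (K * ((n : ℝ) + 1) ^ (e + 1))) := by
          linarith
      _ = _ := by rw [hQ]; ring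
  have hp : 0 ≤ K * ((n : ℝ) + 1) ^ e := by positivity
  have h2 : Q * |qsCost P (n + 2) j| ≤ Q * (K * ((n : ℝ) + 1) ^ (e + 1)
      + K * ((n : ℝ) + 1) ^ e) := by nlinarith
  have h3 := le_of_mul_le_mul_left h2 (by linarith)
  refine h3.trans ?_
  calc K * ((n : ℝ) + 1) ^ (e + 1) + K * ((n : ℝ) + 1) ^ e
      = K * (((n : ℝ) + 1) ^ e * (n + 2)) := by ring
    _ ≤ K * (((n : ℝ) + 3) ^ e * (n + 3)) := by gcongr <;> linarith
    _ = _ := by push_cast; ring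

lemma sum_weight (a : ℕ → ℝ) (n : ℕ) :
    ∑ s ∈ Finset.range (n + 1), ((n : ℝ) + 1 - (s : ℝ)) * a s
      = ∑ m ∈ Finset.range (n + 1), ∑ s ∈ Finset.range (m + 1), a s := by
  induction n with
  | zero => simp
  | succ n ih =>
    rw [Finset.sum_range_succ _ (n + 1), Finset.sum_range_succ _ (n + 1), ← ih,
      Finset.sum_range_succ _ (n + 1), ← add_assoc, ← Finset.sum_add_distrib]
    congr 1
    · refine Finset.sum_congr rfl fun s _ => ?_
      push_cast; ring
    · push_cast; ring

/-- Suppose `P 0 = P 1 = 0` and `|P n| ≤ A·(n+1)^d`.  For fixed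
`j ≥ 1`: all the series `C_k(z)` (`k ≥ 1`) converge absolutely on `(−1,1)`,
`C_j` is twice differentiable on `(−1,1)` with `C_j(0) = C_j'(0) = 0`, and
`C_j''(z) − (2/(1−z)²)·C_j(z) = ∑_{n ≥ max(j,2)} n(n−1)·P(n)·z^{n−2}
 + (2/(1−z))·∑_{k=1}^{j−1} C_k(z)·z^{j−k−1}
 + 2·∑_{k=1}^{j−2} (j−k−1)·C_k(z)·z^{j−k−2}`. -/
theorem rank_gf_ode (P : ℕ → ℝ) (hP0 : P 0 = 0) (hP1 : P 1 = 0)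
    (A : ℝ) (hA : 0 < A) (d : ℕ) (hPbound : ∀ n : ℕ, |P n| ≤ A * ((n : ℝ) + 1) ^ d)
    (j : ℕ) (hj : 1 ≤ j) :
    (∀ k : ℕ, 1 ≤ k → ∀ z ∈ Set.Ioo (-1 : ℝ) 1,
        Summable (fun n : ℕ => |qsCost P n (k : ℤ) * z ^ n|)) ∧
    (∀ z ∈ Set.Ioo (-1 : ℝ) 1,
        DifferentiableAt ℝ (rankGF P j) z ∧ DifferentiableAt ℝ (deriv (rankGF P j)) z) ∧
    rankGF P j 0 = 0 ∧ deriv (rankGF P j) 0 = 0 ∧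
    (∀ z ∈ Set.Ioo (-1 : ℝ) 1,
        deriv (deriv (rankGF P j)) z - 2 / (1 - z) ^ 2 * rankGF P j z =
          (∑' n : ℕ, if max j 2 ≤ n then (n : ℝ) * ((n : ℝ) - 1) * P n * z ^ (n - 2) else 0)
          + 2 / (1 - z) * ∑ k ∈ Finset.Icc 1 (j - 1), rankGF P k z * z ^ (j - k - 1)
          + 2 * ∑ k ∈ Finset.Icc 1 (j - 2),
              ((j : ℝ) - (k : ℝ) - 1) * rankGF P k z * z ^ (j - k - 2)) := by
  have hP : PolyB P := ⟨A, d, hA.le, hPbound⟩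
  have hB : ∀ k : ℕ, 1 ≤ k → PolyB (fun n => qsCost P n k) := fun k hk => qs_polyB P hP k hk
  have hlt : ∀ z ∈ Set.Ioo (-1 : ℝ) 1, |z| < 1 := fun z hz => abs_lt.2 hz
  have hB1 : PolyB (fun n => ((n : ℝ) + 1) * qsCost P (n + 1) j) :=
    (PolyB.cast.add (PolyB.const 1)).mul (hB j hj).succ
  have hD1 : ∀ z ∈ Set.Ioo (-1 : ℝ) 1, HasDerivAt (rankGF P j)
      (∑' n : ℕ, (((n : ℝ) + 1) * qsCost P (n + 1) j) * z ^ n) z :=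
    fun z hz => (hB j hj).hasDerivAt (hlt z hz)
  have hD2 : ∀ z ∈ Set.Ioo (-1 : ℝ) 1, HasDerivAt (deriv (rankGF P j))
      (∑' n : ℕ, (((n : ℝ) + 1) * ((((n + 1 : ℕ) : ℝ) + 1) * qsCost P (n + 1 + 1) j)) * z ^ n) z := by
    intro z hz
    refine (hB1.hasDerivAt (hlt z hz)).congr_of_eventuallyEq ?_
    filter_upwards [isOpen_Ioo.mem_nhds hz] with y hy
    exact (hD1 y hy).deriv
  refine ⟨fun k hk z hz => (hB k hk).summable (hlt z hz),
    fun z hz => ⟨(hD1 z hz).differentiableAt, (hD2 z hz).differentiableAt⟩, ?_, ?_, ?_⟩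
  · unfold rankGF
    rw [tsum_eq_single 0]
    · rw [qs_zero P 0 j (by omega), zero_mul]
    · intro n hn
      rw [zero_pow hn, mul_zero]
  · rw [(hD1 0 (by simp)).deriv, tsum_eq_single 0]
    · rw [qs_zero P _ j (by omega)]; simp
    · intro n hn
      rw [zero_pow hn, mul_zero]
  intro z hz
  have hz1 := hlt z hz
  have hF : ∀ k : ℕ, 1 ≤ k → HasSum (fun n => qsCost P n k * z ^ n) (rankGF P k z) :=
    fun k hk => (hB k hk).hasSum hz1
  have hB2 : PolyB (fun n => ((n : ℝ) + 1) * ((((n + 1 : ℕ) : ℝ) + 1) * qsCost P (n + 1 + 1) j)) :=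
    (PolyB.cast.add (PolyB.const 1)).mul hB1.succ
  have hL := hB2.hasSum hz1
  rw [← (hD2 z hz).deriv] at hL
  -- the partitioning-cost part
  have hBP : PolyB (fun n => if j ≤ n + 2 then ((n : ℝ) + 2) * ((n : ℝ) + 1) * P (n + 2) else 0) := by
    refine PolyB.of_le (b := fun n => ((n : ℝ) + 2) * ((n : ℝ) + 1) * P (n + 2))
        (((PolyB.cast.add (PolyB.const 2)).mul (PolyB.cast.add (PolyB.const 1))).mul
          hP.succ.succ) fun n => ?_
    split_ifs
    · exact le_rfl
    · simp; positivity
  have hT := hBP.hasSum hz1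
  have hTe : (∑' n : ℕ, if max j 2 ≤ n then (n : ℝ) * ((n : ℝ) - 1) * P n * z ^ (n - 2) else 0)
      = ∑' n : ℕ, (if j ≤ n + 2 then ((n : ℝ) + 2) * ((n : ℝ) + 1) * P (n + 2) else 0) * z ^ n := by
    refine HasSum.tsum_eq ?_
    rw [← (add_left_injective 2).hasSum_iff]
    · have he : ((fun n : ℕ => if max j 2 ≤ n then (n : ℝ) * ((n : ℝ) - 1) * P n * z ^ (n - 2)
          else 0) ∘ fun x => x + 2) = fun n : ℕ =>
          (if j ≤ n + 2 then ((n : ℝ) + 2) * ((n : ℝ) + 1) * P (n + 2) else 0) * z ^ n := by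
        funext n
        have hi : (max j 2 ≤ n + 2) ↔ j ≤ n + 2 := by omega
        simp only [Function.comp, hi, Nat.add_sub_cancel]
        split_ifs
        · push_cast; ring
        · rw [zero_mul]
      rw [he]
      exact hT
    · intro n hn
      rw [if_neg]
      intro hp
      exact hn ⟨n - 2, by simp; omega⟩
  have h1 : HasSum (fun n : ℕ => (∑ s ∈ Finset.range (n + 1), ((n : ℝ) + 1 - (s : ℝ)) * qsCost P s j)
      * z ^ n) (rankGF P j z * (1 - z)⁻¹ * (1 - z)⁻¹) := by
    have := (hB j hj).psum.hasSum_psum hz1 ((hB j hj).hasSum_psum hz1 (hF j hj))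
    simpa only [sum_weight] using this
  have h2 : HasSum (fun n : ℕ => ∑ k ∈ Finset.Icc 1 (j - 1), (if j - k - 1 ≤ n then
          ∑ m ∈ Finset.range (n - (j - k - 1) + 1), qsCost P m k else 0) * z ^ n)
      (∑ k ∈ Finset.Icc 1 (j - 1), rankGF P k z * (1 - z)⁻¹ * z ^ (j - k - 1)) := by
    refine hasSum_sum fun k hk => ?_
    rw [Finset.mem_Icc] at hk
    exact hasSum_shift (a := fun n => ∑ m ∈ Finset.range (n + 1), qsCost P m k) (j - k - 1)
      ((hB k hk.1).hasSum_psum hz1 (hF k hk.1))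
  have h3 : HasSum (fun n : ℕ => ∑ k ∈ Finset.Icc 1 (j - 2), ((j : ℝ) - (k : ℝ) - 1) *
        ((if j - k - 2 ≤ n then qsCost P (n - (j - k - 2)) k else 0) * z ^ n))
      (∑ k ∈ Finset.Icc 1 (j - 2), ((j : ℝ) - (k : ℝ) - 1) * (rankGF P k z * z ^ (j - k - 2))) := by
    refine hasSum_sum fun k hk => ?_
    rw [Finset.mem_Icc] at hk
    exact (hasSum_shift (a := fun n => qsCost P n k) (j - k - 2) (hF k hk.1)).mul_left _
  have hR := ((hT.add (h1.mul_left 2)).add (h2.mul_left 2)).add (h3.mul_left 2)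
  have hfun : (fun n : ℕ => ((n : ℝ) + 1) * ((((n + 1 : ℕ) : ℝ) + 1) * qsCost P (n + 1 + 1) j) * z ^ n)
      = fun n : ℕ => (if j ≤ n + 2 then ((n : ℝ) + 2) * ((n : ℝ) + 1) * P (n + 2) else 0) * z ^ n
        + 2 * ((∑ s ∈ Finset.range (n + 1), ((n : ℝ) + 1 - (s : ℝ)) * qsCost P s j) * z ^ n)
        + 2 * (∑ k ∈ Finset.Icc 1 (j - 1), (if j - k - 1 ≤ n then
          ∑ m ∈ Finset.range (n - (j - k - 1) + 1), qsCost P m k else 0) * z ^ n)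
        + 2 * ∑ k ∈ Finset.Icc 1 (j - 2), ((j : ℝ) - (k : ℝ) - 1) *
        ((if j - k - 2 ≤ n then qsCost P (n - (j - k - 2)) k else 0) * z ^ n) := by
    funext n
    have hc := qs_conv P j hj n
    have e : ((n : ℝ) + 1) * ((((n + 1 : ℕ) : ℝ) + 1) * qsCost P (n + 1 + 1) j) * z ^ n
        = (((n : ℝ) + 2) * ((n : ℝ) + 1) * qsCost P (n + 2) j) * z ^ n := by push_cast; ring
    rw [e, hc]
    simp only [← mul_assoc, ← Finset.sum_mul]
    ring
  rw [hfun] at hL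
  rw [hL.unique hR, hTe]
  have hz0 : (1 : ℝ) - z ≠ 0 := by have := hz.2; intro h; linarith
  have g2 : ∑ k ∈ Finset.Icc 1 (j - 1), rankGF P k z * (1 - z)⁻¹ * z ^ (j - k - 1)
      = (1 - z)⁻¹ * ∑ k ∈ Finset.Icc 1 (j - 1), rankGF P k z * z ^ (j - k - 1) := by
    rw [Finset.mul_sum]
    exact Finset.sum_congr rfl fun k _ => by ring
  have g3 : ∑ k ∈ Finset.Icc 1 (j - 2), ((j : ℝ) - (k : ℝ) - 1) * (rankGF P k z * z ^ (j - k - 2))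
      = ∑ k ∈ Finset.Icc 1 (j - 2), ((j : ℝ) - (k : ℝ) - 1) * rankGF P k z * z ^ (j - k - 2) :=
    Finset.sum_congr rfl fun k _ => by ring
  rw [g2, g3]
  field_simp
  ring
end

section
/- Let C be the dual-pivot quickselect cost array defined from the 'Count' partitioning costs P^ct by the standard recurrence. Then for every n ≥ 3, the average number of comparisons to select the smallest element satisfies C(n,1) = C(n,n) = (9/4)·n + (1/12)·∑_{k=1}^{n−1} H_k/(n−k) − (1/6)·∑_{k=2}^n H^alt_{k−1}/k − (43/18)·H_n + (1/18)·H^alt_n + 5/108 + ( (n−1)/(36·n·(n−2)) if n is odd ) − ( 1/(36·(n−1)) if n is even ). -/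
open Finset

/-- Generating function of the expected partitioning costs of the strategy
"Count". -/
noncomputable def countGF (z : ℝ) : ℝ :=
  3 / (2 * (1 - z) ^ 2) + (Real.log ((1 + z) / (1 - z)) / 2) / (2 * (1 - z))
  - 31 * z ^ 2 / (8 * (1 - z)) - ((3 + z) / 8) * (Real.log ((1 + z) / (1 - z)) / 2)
  - 3 / 2 - 25 * z / 8

open Filter Topology in
lemma ps_unique (a b : ℕ → ℝ) (F : ℝ → ℝ)
    (ha : ∀ z : ℝ, |z| < 1 → HasSum (fun n : ℕ => a n * z ^ n) (F z))
    (hb : ∀ z : ℝ, |z| < 1 → HasSum (fun n : ℕ => b n * z ^ n) (F z)) : a = b := by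
  have key : ∀ c : ℕ → ℝ, (∀ z : ℝ, |z| < 1 → HasSum (fun n : ℕ => c n * z ^ n) (F z)) →
      HasFPowerSeriesAt F (FormalMultilinearSeries.ofScalars ℝ c) 0 := by
    intro c hc
    rw [hasFPowerSeriesAt_iff]
    filter_upwards [Metric.ball_mem_nhds (0 : ℝ) one_pos] with z hz
    have hz' : |z| < 1 := by simpa [Metric.mem_ball] using hz
    simpa [FormalMultilinearSeries.coeff_ofScalars, mul_comm] using hc z hz'
  have h := (key a ha).eq_formalMultilinearSeries (key b hb)
  funext n
  have := congrArg (fun p => FormalMultilinearSeries.coeff p n) h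
  simpa [FormalMultilinearSeries.coeff_ofScalars] using this

lemma ps_cumsum (a : ℕ → ℝ) (z s : ℝ) (hz : |z| < 1)
    (ha : HasSum (fun n : ℕ => a n * z ^ n) s) :
    HasSum (fun n : ℕ => (∑ k ∈ range (n + 1), a k) * z ^ n) (s / (1 - z)) := by
  have h1 : Summable fun n : ℕ => ‖a n * z ^ n‖ := ha.summable.norm
  have h2 : HasSum (fun n : ℕ => z ^ n) (1 - z)⁻¹ := hasSum_geometric_of_abs_lt_one hz
  have h := hasSum_sum_range_mul_of_summable_norm h1 h2.summable.norm
  rw [ha.tsum_eq, h2.tsum_eq] at h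
  convert! h using 1
  funext n
  rw [Finset.sum_mul]
  refine Finset.sum_congr rfl fun k hk => ?_
  have : k ≤ n := by simpa [Nat.lt_succ_iff] using hk
  rw [mul_assoc, ← pow_add]
  congr 2
  omega

lemma ps_shift (a : ℕ → ℝ) (z s : ℝ) (ha0 : a 0 = 0)
    (ha : HasSum (fun n : ℕ => a n * z ^ n) s) :
    HasSum (fun n : ℕ => a (n - 1) * z ^ n) (z * s) := by
  have h : HasSum (fun n : ℕ => a ((n + 1) - 1) * z ^ (n + 1)) (z * s) := by
    convert! ha.mul_left z using 1
    funext n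
    simp [pow_succ]; ring
  have h2 := (hasSum_nat_add_iff (f := fun n : ℕ => a (n - 1) * z ^ n) 1).1 h
  simpa [ha0] using h2

noncomputable def cc (n : ℕ) : ℝ := (1 - (-1) ^ n) / (2 * n)

lemma ps_artanh (z : ℝ) (hz : |z| < 1) :
    HasSum (fun n : ℕ => cc n * z ^ n) (Real.log ((1 + z) / (1 - z)) / 2) := by
  have h1 := Real.hasSum_pow_div_log_of_abs_lt_one hz
  have h2 := Real.hasSum_pow_div_log_of_abs_lt_one (x := -z) (by rwa [abs_neg])
  have h3 := (h1.sub h2).mul_left (1 / 2 : ℝ)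
  obtain ⟨hl, hr⟩ := abs_lt.1 hz
  have h4 : HasSum (fun n : ℕ => cc (n + 1) * z ^ (n + 1))
      (Real.log ((1 + z) / (1 - z)) / 2) := by
    convert! h3 using 1
    · funext n
      have : (n : ℝ) + 1 ≠ 0 := by positivity
      rw [neg_pow z]
      simp only [cc]
      push_cast
      field_simp
    · rw [Real.log_div (by linarith) (by linarith)]
      ring_nf
  have h5 := (hasSum_nat_add_iff (f := fun n : ℕ => cc n * z ^ n) 1).1 h4
  simpa [cc] using h5

lemma H_succ (n : ℕ) : H (n + 1) = H n + 1 / ((n : ℝ) + 1) := by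
  unfold H
  rw [Finset.sum_Icc_succ_top (by omega)]
  push_cast; rfl

lemma Halt_succ (n : ℕ) : Halt (n + 1) = Halt n - (-1) ^ n / ((n : ℝ) + 1) := by
  unfold Halt
  rw [Finset.sum_Icc_succ_top (by omega)]
  push_cast; rw [pow_succ]; ring

lemma cc_sum (n : ℕ) : ∑ k ∈ range (n + 1), cc k = (H n - Halt n) / 2 := by
  induction n with
  | zero => simp [cc, H, Halt]
  | succ n ih =>
    rw [Finset.sum_range_succ, ih, H_succ, Halt_succ, cc]
    have : (n : ℝ) + 1 ≠ 0 := by positivity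
    push_cast
    rw [pow_succ]
    field_simp
    ring

lemma Pct_formula (Pct : ℕ → ℝ)
    (hPct : ∀ z : ℝ, |z| < 1 → HasSum (fun n : ℕ => Pct n * z ^ n) (countGF z)) (n : ℕ) :
    Pct (n + 2) = 3 / 2 * ((n : ℝ) + 3) + (H (n + 2) - Halt (n + 2)) / 4 - 31 / 8
      - 3 / 8 * cc (n + 2) - 1 / 8 * cc (n + 1) := by
  have h := ps_unique Pct (fun n => 3 / 2 * (∑ k ∈ range (n + 1), (1 : ℝ))
    + 1 / 2 * (∑ k ∈ range (n + 1), cc k) - 31 / 8 * 1 - 3 / 8 * cc n - 1 / 8 * cc (n - 1)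
    + (if n = 0 then 19 / 8 else 0) + (if n = 1 then 6 / 8 else 0)) countGF hPct ?_
  · rw [h]
    simp only [cc_sum]
    simp
    ring
  · intro z hz
    have g1 : HasSum (fun n : ℕ => (1 : ℝ) * z ^ n) (1 / (1 - z)) := by
      simpa using hasSum_geometric_of_abs_lt_one hz
    have g2 := ps_cumsum _ z _ hz g1
    have r1 := ps_artanh z hz
    have r2 := ps_cumsum _ z _ hz r1
    have r3 := ps_shift _ z _ (by simp [cc]) r1
    have p0 : HasSum (fun n : ℕ => (if n = 0 then (19 / 8 : ℝ) else 0) * z ^ n) (19 / 8) := by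
      convert! hasSum_ite_eq (0 : ℕ) (19 / 8 : ℝ) using 1
      funext n; split_ifs with h <;> simp [h]
    have p1 : HasSum (fun n : ℕ => (if n = 1 then (6 / 8 : ℝ) else 0) * z ^ n) (6 / 8 * z) := by
      convert! hasSum_ite_eq (1 : ℕ) (6 / 8 * z : ℝ) using 1
      funext n; split_ifs with h <;> simp [h]
    have := ((((((g2.mul_left (3 / 2)).add (r2.mul_left (1 / 2))).sub (g1.mul_left (31 / 8))).sub
      (r1.mul_left (3 / 8))).sub (r3.mul_left (1 / 8))).add p0).add p1
    convert! this using 1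
    · funext n; ring
    · have : 1 - z ≠ 0 := by have := (abs_lt.1 hz).2; linarith
      unfold countGF
      generalize Real.log ((1 + z) / (1 - z)) = L
      field_simp
      ring

lemma qs_one (P : ℕ → ℝ) (m : ℕ) :
    qsCost P (m + 2) 1 = P (m + 2) + 2 / (((m : ℝ) + 2) * ((m : ℝ) + 1)) *
      ∑ s ∈ range (m + 1), ((m : ℝ) + 1 - s) * qsCost P s 1 := by
  rw [qsCost]
  have hc : ¬ (m + 2 ≤ 1 ∨ (1 : ℤ) < 1 ∨ ((m + 2 : ℕ) : ℤ) < 1) := by omega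
  rw [if_neg hc]
  have e2 : ∀ m' : ℕ, Finset.Icc (max 0 ((1 : ℤ) - (m' : ℤ) - 1))
      (min (1 - 2) (((m + 2 : ℕ) : ℤ) - (m' : ℤ) - 2)) = ∅ := by
    intro m'; apply Finset.Icc_eq_empty; omega
  have e3 : Finset.Icc (((m + 2 : ℕ) : ℤ) - 1 + 1).toNat (m + 2 - 2) = ∅ := by
    apply Finset.Icc_eq_empty; omega
  rw [Finset.sum_attach (Finset.Icc (1 : ℤ).toNat (m + 2 - 2))
    (fun s => (((m + 2 : ℕ) : ℝ) - 1 - (s : ℕ)) * qsCost P s 1)]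
  rw [Finset.sum_attach (Finset.Icc (((m + 2 : ℕ) : ℤ) - 1 + 1).toNat (m + 2 - 2))
    (fun l => (((m + 2 : ℕ) : ℝ) - 1 - (l : ℕ)) * qsCost P l (((m + 2 : ℕ) : ℤ) - 1 + 1))]
  rw [e3]
  simp only [e2, Finset.sum_empty, Finset.sum_const_zero, add_zero]
  have e0 : qsCost P 0 1 = 0 := by rw [qsCost]; simp
  have : Finset.range (m + 1) = insert 0 (Finset.Icc (1 : ℤ).toNat (m + 2 - 2)) := by
    ext x; simp; omega
  rw [this, Finset.sum_insert (by simp), e0]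
  push_cast
  have a1 : (m : ℝ) + 2 - 1 = m + 1 := by ring
  rw [a1]; ring

lemma qs_last (P : ℕ → ℝ) (m : ℕ) :
    qsCost P (m + 2) ((m + 2 : ℕ) : ℤ) = P (m + 2) + 2 / (((m : ℝ) + 2) * ((m : ℝ) + 1)) *
      ∑ s ∈ range (m + 1), ((m : ℝ) + 1 - s) * qsCost P s 1 := by
  rw [qsCost]
  have hc : ¬ (m + 2 ≤ 1 ∨ ((m + 2 : ℕ) : ℤ) < 1 ∨ ((m + 2 : ℕ) : ℤ) < ((m + 2 : ℕ) : ℤ)) := by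
    omega
  rw [if_neg hc]
  have e2 : ∀ m' : ℕ, Finset.Icc (max 0 (((m + 2 : ℕ) : ℤ) - (m' : ℤ) - 1))
      (min (((m + 2 : ℕ) : ℤ) - 2) (((m + 2 : ℕ) : ℤ) - (m' : ℤ) - 2)) = ∅ := by
    intro m'; apply Finset.Icc_eq_empty; omega
  have e3 : Finset.Icc ((m + 2 : ℕ) : ℤ).toNat (m + 2 - 2) = ∅ := by
    apply Finset.Icc_eq_empty; omega
  have e4 : ((m + 2 : ℕ) : ℤ) - ((m + 2 : ℕ) : ℤ) + 1 = 1 := by ring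
  rw [Finset.sum_attach (Finset.Icc ((m + 2 : ℕ) : ℤ).toNat (m + 2 - 2))
    (fun s => (((m + 2 : ℕ) : ℝ) - 1 - (s : ℕ)) * qsCost P s ((m + 2 : ℕ) : ℤ))]
  rw [Finset.sum_attach (Finset.Icc (((m + 2 : ℕ) : ℤ) - ((m + 2 : ℕ) : ℤ) + 1).toNat (m + 2 - 2))
    (fun l => (((m + 2 : ℕ) : ℝ) - 1 - (l : ℕ)) *
      qsCost P l (((m + 2 : ℕ) : ℤ) - ((m + 2 : ℕ) : ℤ) + 1))]
  rw [e3, e4]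
  simp only [e2, Finset.sum_empty, Finset.sum_const_zero, zero_add]
  have e0 : qsCost P 0 1 = 0 := by rw [qsCost]; simp
  have : Finset.range (m + 1) = insert 0 (Finset.Icc (1 : ℤ).toNat (m + 2 - 2)) := by
    ext x; simp; omega
  rw [this, Finset.sum_insert (by simp), e0]
  push_cast
  have a1 : (m : ℝ) + 2 - 1 = m + 1 := by ring
  rw [a1]; ring

noncomputable def TT (n : ℕ) : ℝ := ∑ k ∈ Finset.Icc 1 (n - 1), H k / ((n : ℝ) - (k : ℝ))
noncomputable def UU (n : ℕ) : ℝ := ∑ k ∈ Finset.Icc 2 n, Halt (k - 1) / (k : ℝ)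

lemma UU_succ (n : ℕ) (hn : 1 ≤ n) : UU (n + 1) = UU n + Halt n / ((n : ℝ) + 1) := by
  unfold UU
  rw [Finset.sum_Icc_succ_top (by omega)]
  push_cast; rfl

lemma H_range (n : ℕ) : H n = ∑ k ∈ range n, 1 / ((k : ℝ) + 1) := by
  induction n with
  | zero => simp [H]
  | succ n ih => rw [H_succ, ih, Finset.sum_range_succ]

lemma TT_range (n : ℕ) : TT (n + 1) = ∑ k ∈ range n, H (k + 1) / ((n : ℝ) - k) := by
  unfold TT
  symm
  refine Finset.sum_nbij' (fun k => k + 1) (fun k => k - 1) ?_ ?_ ?_ ?_ ?_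
  · intro k hk; simp at hk ⊢; omega
  · intro k hk; simp at hk ⊢; omega
  · intro k hk; simp
  · intro k hk; simp at hk ⊢; omega
  · intro k hk; push_cast; rw [add_sub_add_right_eq_sub]

lemma TT_succ (n : ℕ) : TT (n + 2) = TT (n + 1) + 2 * H (n + 1) / ((n : ℝ) + 2) := by
  rw [TT_range, TT_range, Finset.sum_range_succ']
  have h1 : ∑ k ∈ range n, H (k + 1 + 1) / (((n + 1 : ℕ) : ℝ) - ((k + 1 : ℕ) : ℝ))
      = ∑ k ∈ range n, H (k + 1) / ((n : ℝ) - k)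
        + ∑ k ∈ range n, 1 / (((k : ℝ) + 2) * ((n : ℝ) - k)) := by
    rw [← Finset.sum_add_distrib]
    refine Finset.sum_congr rfl fun k hk => ?_
    have hk : (k : ℝ) < n := by exact_mod_cast Finset.mem_range.1 hk
    have : (n : ℝ) - k ≠ 0 := by linarith
    have : (k : ℝ) + 2 ≠ 0 := by positivity
    have : (k : ℝ) + 1 + 1 ≠ 0 := by positivity
    rw [H_succ (k + 1)]
    push_cast
    rw [add_sub_add_right_eq_sub]
    field_simp
    ring
  rw [h1]
  have h2 : ∑ k ∈ range n, 1 / (((k : ℝ) + 2) * ((n : ℝ) - k))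
      = 1 / ((n : ℝ) + 2) * (∑ k ∈ range n, 1 / ((k : ℝ) + 2) + ∑ k ∈ range n, 1 / ((n : ℝ) - k)) := by
    rw [← Finset.sum_add_distrib, Finset.mul_sum]
    refine Finset.sum_congr rfl fun k hk => ?_
    have hk : (k : ℝ) < n := by exact_mod_cast Finset.mem_range.1 hk
    have : (n : ℝ) - k ≠ 0 := by linarith
    have : (k : ℝ) + 2 ≠ 0 := by positivity
    have : (n : ℝ) + 2 ≠ 0 := by positivity
    field_simp
    ring
  have h3 : ∑ k ∈ range n, 1 / ((n : ℝ) - k) = H n := by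
    rw [H_range, ← Finset.sum_range_reflect]
    refine Finset.sum_congr rfl fun k hk => ?_
    have hk := Finset.mem_range.1 hk
    rw [Nat.sub_sub, Nat.cast_sub (by omega)]
    push_cast; ring_nf
  have h4 : ∑ k ∈ range n, 1 / ((k : ℝ) + 2) = H (n + 1) - 1 := by
    rw [H_range (n + 1), Finset.sum_range_succ']
    push_cast
    simp [add_assoc]
    norm_num
  rw [h2, h3, h4, H_succ n]
  have : H (0 + 1) = 1 := by simp [H]
  rw [this]
  push_cast
  have : (n : ℝ) + 2 ≠ 0 := by positivity
  have : (n : ℝ) + 1 ≠ 0 := by positivity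
  simp only [CharP.cast_eq_zero, sub_zero]
  field_simp
  ring

noncomputable def ff (n : ℕ) : ℝ := 9 / 4 * (n : ℝ)
      + 1 / 12 * TT n
      - 1 / 6 * UU n
      - 43 / 18 * H n
      + 1 / 18 * Halt n
      + 5 / 108
      + (if Odd n then ((n : ℝ) - 1) / (36 * (n : ℝ) * ((n : ℝ) - 2)) else 0)
      - (if Even n then 1 / (36 * ((n : ℝ) - 1)) else 0)

lemma qs_rec_s11 (P : ℕ → ℝ) (m : ℕ) :
    ((m : ℝ) + 4) * (m + 3) * (qsCost P (m + 4) 1 - P (m + 4)) =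
      2 * (((m : ℝ) + 3) * (m + 2) * (qsCost P (m + 3) 1 - P (m + 3)))
      - ((m : ℝ) + 2) * (m + 1) * (qsCost P (m + 2) 1 - P (m + 2)) + 2 * qsCost P (m + 2) 1 := by
  have r0 := qs_one P m
  have r1 := qs_one P (m + 1)
  have r2 := qs_one P (m + 2)
  have s1 : ∑ s ∈ range (m + 1 + 1), (((m + 1 : ℕ) : ℝ) + 1 - s) * qsCost P s 1 =
      ∑ s ∈ range (m + 1), ((m : ℝ) + 1 - s) * qsCost P s 1
        + (∑ s ∈ range (m + 1), qsCost P s 1 + qsCost P (m + 1) 1) := by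
    rw [Finset.sum_range_succ, ← add_assoc, ← Finset.sum_add_distrib]
    congr 1
    · refine Finset.sum_congr rfl fun k _ => ?_
      push_cast; ring
    · push_cast; ring
  have s2 : ∑ s ∈ range (m + 2 + 1), (((m + 2 : ℕ) : ℝ) + 1 - s) * qsCost P s 1 =
      ∑ s ∈ range (m + 1), ((m : ℝ) + 1 - s) * qsCost P s 1
        + (2 * ∑ s ∈ range (m + 1), qsCost P s 1 + 2 * qsCost P (m + 1) 1 + qsCost P (m + 2) 1) := by
    rw [Finset.sum_range_succ, Finset.sum_range_succ, Finset.mul_sum, ← add_assoc, ← add_assoc,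
      ← Finset.sum_add_distrib]
    congr 1
    · congr 1
      · refine Finset.sum_congr rfl fun k _ => ?_
        push_cast; ring
      · push_cast; ring
    · push_cast; ring
  rw [s1] at r1
  rw [s2] at r2
  generalize ∑ s ∈ range (m + 1), ((m : ℝ) + 1 - s) * qsCost P s 1 = X at *
  generalize ∑ s ∈ range (m + 1), qsCost P s 1 = Y at *
  push_cast at r1 r2
  have d0 : ((m : ℝ) + 2) * (m + 1) * (qsCost P (m + 2) 1 - P (m + 2)) = 2 * X := by
    rw [r0]; field_simp; ring
  have d1 : ((m : ℝ) + 3) * (m + 2) * (qsCost P (m + 3) 1 - P (m + 3))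
      = 2 * (X + (Y + qsCost P (m + 1) 1)) := by
    rw [show m + 3 = m + 1 + 2 from rfl, r1]
    have : (m : ℝ) + 1 + 2 ≠ 0 := by positivity
    have : (m : ℝ) + 1 + 1 ≠ 0 := by positivity
    field_simp; ring
  have d2 : ((m : ℝ) + 4) * (m + 3) * (qsCost P (m + 4) 1 - P (m + 4))
      = 2 * (X + (2 * Y + 2 * qsCost P (m + 1) 1 + qsCost P (m + 2) 1)) := by
    rw [show m + 4 = m + 2 + 2 from rfl, r2]
    have : (m : ℝ) + 2 + 2 ≠ 0 := by positivity
    have : (m : ℝ) + 2 + 1 ≠ 0 := by positivity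
    field_simp; ring
  rw [d0, d1, d2]; ring

lemma solve_aux (a b q p R : ℝ) (ha : a ≠ 0) (hb : b ≠ 0) (h : a * b * (q - p) = R) :
    q = p + R / (a * b) := by
  rw [← h]; field_simp; ring

lemma main_ff (Pct : ℕ → ℝ)
    (hPct : ∀ z : ℝ, |z| < 1 → HasSum (fun n : ℕ => Pct n * z ^ n) (countGF z)) (m : ℕ) :
    qsCost Pct (m + 3) 1 = ff (m + 3) ∧ qsCost Pct (m + 4) 1 = ff (m + 4) := by
  have hP := Pct_formula Pct hPct
  induction m with
  | zero =>
    have q0 : qsCost Pct 0 1 = 0 := by rw [qsCost]; simp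
    have q1 : qsCost Pct 1 1 = 0 := by rw [qsCost]; simp
    have q2 := qs_one Pct 0
    have q3 := qs_one Pct 1
    have q4 := qs_one Pct 2
    have p0 := hP 0
    have p1 := hP 1
    have p2 := hP 2
    have t1 : TT 1 = 0 := by simp [TT]
    have t2 := TT_succ 0
    have t3 := TT_succ 1
    have t4 := TT_succ 2
    have u1 : UU 1 = 0 := by simp [UU]
    have u2 := UU_succ 1 le_rfl
    have u3 := UU_succ 2 (by norm_num)
    have u4 := UU_succ 3 (by norm_num)
    have h0 : H 0 = 0 := by simp [H]
    have h1 := H_succ 0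
    have h2 := H_succ 1
    have h3 := H_succ 2
    have h4 := H_succ 3
    have k0 : Halt 0 = 0 := by simp [Halt]
    have k1 := Halt_succ 0
    have k2 := Halt_succ 1
    have k3 := Halt_succ 2
    have k4 := Halt_succ 3
    simp only [Finset.sum_range_succ, Finset.sum_range_zero, cc] at *
    norm_num at *
    have o3 : Odd 3 := by decide
    have e3 : ¬ Even 3 := by decide
    have o4 : ¬ Odd 4 := by decide
    have e4 : Even 4 := by decide
    simp only [ff, if_pos o3, if_neg e3, if_neg o4, if_pos e4]
    simp only [q0, q1, h0, k0, t1, u1, h1, k1, h2, k2, h3, k3, h4, k4, p0, p1, p2, q2, q3, q4,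
      t2, t3, t4, u2, u3, u4]
    norm_num
  | succ m ih =>
    refine ⟨ih.2, ?_⟩
    have r := qs_rec_s11 Pct (m + 1)
    rw [show m + 1 + 2 = m + 3 from rfl, show m + 1 + 3 = m + 4 from rfl,
      show m + 1 + 4 = m + 5 from rfl, ih.1, ih.2, hP (m + 1), hP (m + 2), hP (m + 3)] at r
    rw [show m + 1 + 4 = m + 5 from rfl]
    have t4 : TT (m + 4) = _ := TT_succ (m + 2)
    have t5 : TT (m + 5) = _ := TT_succ (m + 3)
    have u4 : UU (m + 4) = _ := UU_succ (m + 3) (by omega)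
    have u5 : UU (m + 5) = _ := UU_succ (m + 4) (by omega)
    have h4 : H (m + 4) = _ := H_succ (m + 3)
    have h5 : H (m + 5) = _ := H_succ (m + 4)
    have k4 : Halt (m + 4) = _ := Halt_succ (m + 3)
    have k5 : Halt (m + 5) = _ := Halt_succ (m + 4)
    have hx : (0 : ℝ) ≤ m := Nat.cast_nonneg m
    have n1 : (m : ℝ) + 1 ≠ 0 := by positivity
    have n2 : (m : ℝ) + 2 ≠ 0 := by positivity
    have n3 : (m : ℝ) + 3 ≠ 0 := by positivity
    have n4 : (m : ℝ) + 4 ≠ 0 := by positivity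
    have n5 : (m : ℝ) + 5 ≠ 0 := by positivity
    have A : ((m : ℝ) + 5) * (m + 4) ≠ 0 := mul_ne_zero n5 n4
    have i2 : (m : ℝ) + 3 - 1 = m + 2 := by ring
    have i3 : (m : ℝ) + 3 - 2 = m + 1 := by ring
    have i4 : (m : ℝ) + 4 - 1 = m + 3 := by ring
    have i5 : (m : ℝ) + 4 - 2 = m + 2 := by ring
    have i6 : (m : ℝ) + 5 - 1 = m + 4 := by ring
    have i7 : (m : ℝ) + 5 - 2 = m + 3 := by ring
    have w3 : m + 1 + 2 = m + 3 := rfl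
    have w4 : m + 2 + 2 = m + 4 := rfl
    have w5 : m + 3 + 2 = m + 5 := rfl
    have w6 : m + 2 + 1 = m + 3 := rfl
    have w7 : m + 3 + 1 = m + 4 := rfl
    have w8 : m + 1 + 1 = m + 2 := rfl
    simp only [w3, w4, w5, w6, w7, w8] at r t4 t5
    replace r := solve_aux _ _ _ _ _ (by positivity) (by positivity) r
    rw [r]
    clear r
    rcases Nat.even_or_odd m with hm | hm
    · have o3 : Odd (m + 3) := by grind
      have o4 : ¬ Odd (m + 4) := by grind
      have o5 : Odd (m + 5) := by grind
      have e3 : ¬ Even (m + 3) := by grind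
      have e4 : Even (m + 4) := by grind
      have e5 : ¬ Even (m + 5) := by grind
      have sg : (-1 : ℝ) ^ m = 1 := hm.neg_one_pow
      simp only [ff, cc, if_pos o3, if_neg o4, if_pos o5, if_neg e3, if_pos e4, if_neg e5, t5, t4,
        u5, u4, h5, k5, h4, k4, pow_add, sg]
      generalize TT (m + 3) = T at *
      generalize UU (m + 3) = U at *
      generalize H (m + 3) = h at *
      generalize Halt (m + 3) = k at *
      push_cast
      norm_num [add_assoc]
      simp only [i2, i3, i4, i5, i6, i7]
      generalize (m : ℝ) = x at *
      field_simp
      ring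
    · have o3 : ¬ Odd (m + 3) := by grind
      have o4 : Odd (m + 4) := by grind
      have o5 : ¬ Odd (m + 5) := by grind
      have e3 : Even (m + 3) := by grind
      have e4 : ¬ Even (m + 4) := by grind
      have e5 : Even (m + 5) := by grind
      have sg : (-1 : ℝ) ^ m = -1 := hm.neg_one_pow
      simp only [ff, cc, if_neg o3, if_pos o4, if_neg o5, if_pos e3, if_neg e4, if_pos e5, t5, t4,
        u5, u4, h5, k5, h4, k4, pow_add, sg]
      generalize TT (m + 3) = T at *
      generalize UU (m + 3) = U at *
      generalize H (m + 3) = h at *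
      generalize Halt (m + 3) = k at *
      push_cast
      norm_num [add_assoc]
      simp only [i2, i3, i4, i5, i6, i7]
      generalize (m : ℝ) = x at *
      field_simp
      ring

/-- Exact cost of selecting the smallest (equivalently, the
largest) element with the strategy "Count", for all `n ≥ 3`. -/
theorem count_smallest_exact (Pct : ℕ → ℝ)
    (hPct : ∀ z : ℝ, |z| < 1 → HasSum (fun n : ℕ => Pct n * z ^ n) (countGF z))
    (n : ℕ) (hn : 3 ≤ n) :
    qsCost Pct n 1 = qsCost Pct n (n : ℤ) ∧
    qsCost Pct n 1 =
      9 / 4 * (n : ℝ)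
      + 1 / 12 * ∑ k ∈ Finset.Icc 1 (n - 1), H k / ((n : ℝ) - (k : ℝ))
      - 1 / 6 * ∑ k ∈ Finset.Icc 2 n, Halt (k - 1) / (k : ℝ)
      - 43 / 18 * H n
      + 1 / 18 * Halt n
      + 5 / 108
      + (if Odd n then ((n : ℝ) - 1) / (36 * (n : ℝ) * ((n : ℝ) - 2)) else 0)
      - (if Even n then 1 / (36 * ((n : ℝ) - 1)) else 0) := by
  obtain ⟨m, rfl⟩ : ∃ m, n = m + 3 := ⟨n - 3, by omega⟩
  refine ⟨?_, (main_ff Pct hPct m).1⟩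
  exact (qs_one Pct (m + 1)).trans (qs_last Pct (m + 1)).symm
end
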